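/- arXiv:2301.05365 — 9 statements merged into one kernel-verified Lean document; each statement's English description precedes it below -/
import Mathlib

section
/- Under the proportionality hypothesis H₀^∝, the weighted Monte Carlo randomization p-value stochastically dominates the uniform distribution: for every α ∈ [0,1], the probability under the joint law h that p(D̃⁽⁰⁾, …, D̃⁽ᵐ⁾) ≤ α is at most α; that is, Σ_{(d₀,…,d_m) ∈ 𝒟^(m+1) : p(d₀,…,d_m) ≤ α} h(d₀,…,d_m) ≤ α. -/
open scoped NNReal Classical BigOperators

noncomputable section

/-- The joint law of the tuple `(D̃⁽⁰⁾, …, D̃⁽ᵐ⁾)`: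
`h(d₀, …, d_m) = f(d₀) · ∏_{k=1}^m q(d_k | d₀)`. Here `q e d` denotes `q(e | d)`. -/
def jointLaw {D : Type*} (f : D → ℝ≥0) (q : D → D → ℝ≥0) (m : ℕ)
    (d : Fin (m + 1) → D) : ℝ≥0 :=
  f (d 0) * ∏ k ∈ Finset.univ.erase (0 : Fin (m + 1)), q (d k) (d 0)

/-- `σ_i` : the involution of `𝒟^(m+1)` swapping coordinates `0` and `i`. -/
def swapTuple {D : Type*} (m : ℕ) (i : Fin (m + 1)) (d : Fin (m + 1) → D) :
    Fin (m + 1) → D :=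
  d ∘ Equiv.swap 0 i

/-- Numerator of the weight `w_i`: `f̂(d_i) · ∏_{k ≠ i} q(d_k | d_i)`. -/
def wNum {D : Type*} (q : D → D → ℝ≥0) (fhat : D → ℝ≥0) (m : ℕ)
    (i : Fin (m + 1)) (d : Fin (m + 1) → D) : ℝ≥0 :=
  fhat (d i) * ∏ k ∈ Finset.univ.erase i, q (d k) (d i)

/-- The weight `w_i(d₀, …, d_m)`; in `ℝ≥0`, division by zero yields `0`,
matching the convention that `w_i = 0` when the denominator vanishes. -/
def weight {D : Type*} (q : D → D → ℝ≥0) (fhat : D → ℝ≥0) (m : ℕ)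
    (i : Fin (m + 1)) (d : Fin (m + 1) → D) : ℝ≥0 :=
  wNum q fhat m i d / ∑ j, wNum q fhat m j d

/-- The weighted MC randomization p-value
`p(d₀, …, d_m) = Σ_{i=0}^m w_i · 1[S(d_i) ≥ S(d₀)]`. -/
def pValue {D : Type*} (q : D → D → ℝ≥0) (fhat : D → ℝ≥0) (m : ℕ)
    (S : D → ℝ) (d : Fin (m + 1) → D) : ℝ≥0 :=
  ∑ i, weight q fhat m i d * (if S (d 0) ≤ S (d i) then 1 else 0)

/-- The proportionality hypothesis `H₀^∝`: for every tuple putting positive mass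
on at least one of its swaps, there is a constant `K > 0` (not depending on `i`)
with `f̂(d_i) = K · f(d_i)` for all `i`. -/
def PropHyp {D : Type*} (f : D → ℝ≥0) (q : D → D → ℝ≥0) (fhat : D → ℝ≥0)
    (m : ℕ) : Prop :=
  ∀ d : Fin (m + 1) → D,
    (∃ i, 0 < jointLaw f q m (swapTuple m i d)) →
      ∃ K : ℝ≥0, 0 < K ∧ ∀ i, fhat (d i) = K * f (d i)

theorem aux_ennreal {ι : Type*} (f : ι → ℝ≥0) (hf : ∑' d, f d = 1) :
    ∑' d, (f d : ENNReal) = 1 := by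
  have hs : Summable f := by
    by_contra h
    rw [tsum_eq_zero_of_not_summable h] at hf
    exact zero_ne_one hf
  rw [← ENNReal.coe_tsum hs, hf, ENNReal.coe_one]

theorem aux_pi {D : Type*} (g : D → ENNReal) (hg : ∑' d, g d = 1) (n : ℕ) :
    ∑' d : Fin n → D, ∏ k, g (d k) = 1 := by
  induction n with
  | zero => simp
  | succ n ih =>
    rw [← (Fin.consEquiv (fun _ : Fin (n + 1) => D)).tsum_eq, ENNReal.tsum_prod']
    simp [Fin.prod_univ_succ, Fin.consEquiv, ENNReal.tsum_mul_left, ih, hg]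

theorem wNum_comp {D : Type*} (q : D → D → ℝ≥0) (f : D → ℝ≥0) (m : ℕ)
    (i : Fin (m + 1)) (d : Fin (m + 1) → D) (σ : Equiv.Perm (Fin (m + 1))) :
    wNum q f m i (d ∘ σ) = wNum q f m (σ i) d := by
  unfold wNum
  congr 1
  refine Finset.prod_equiv σ ?_ ?_
  · intro k; simp
  · intro k _; simp

theorem aux_total {D : Type*} (f : D → ℝ≥0) (q : D → D → ℝ≥0) (m : ℕ)
    (hf : ∑' d, f d = 1) (hq : ∀ d, ∑' e, q e d = 1) :
    ∑' d : Fin (m + 1) → D, (wNum q f m 0 d : ENNReal) = 1 := by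
  have e : ∀ d : Fin (m + 1) → D, (wNum q f m 0 d : ENNReal)
      = f (d 0) * ∏ k : Fin m, (q (d k.succ) (d 0) : ENNReal) := by
    intro d
    have h1 : (Finset.univ.erase (0 : Fin (m + 1))) = Finset.univ.map (Fin.succEmb m) := by
      ext k
      simp [Fin.exists_succ_eq]
    simp [wNum, h1]
  simp_rw [e]
  rw [← (Fin.consEquiv (fun _ : Fin (m + 1) => D)).tsum_eq, ENNReal.tsum_prod']
  have h2 := fun a : D => aux_pi (fun e => (q e a : ENNReal)) (aux_ennreal _ (hq a)) m
  simp [Fin.consEquiv, ENNReal.tsum_mul_left, h2, aux_ennreal f hf]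

theorem aux_det {n : ℕ} (w : Fin n → ℝ≥0) (s : Fin n → ℝ) (c : ℝ≥0) :
    ∑ i, (if ∑ j, w j * (if s i ≤ s j then 1 else 0) ≤ c then w i else 0) ≤ c := by
  rw [← Finset.sum_filter]
  set I := Finset.univ.filter
    (fun i => ∑ j, w j * (if s i ≤ s j then (1 : ℝ≥0) else 0) ≤ c) with hI
  rcases I.eq_empty_or_nonempty with h | h
  · simp [h]
  · obtain ⟨i, hi, hmin⟩ := I.exists_min_image s h
    refine le_trans ?_ (Finset.mem_filter.1 hi).2
    calc ∑ j ∈ I, w j = ∑ j ∈ I, w j * (if s i ≤ s j then (1 : ℝ≥0) else 0) := by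
          refine Finset.sum_congr rfl fun j hj => ?_
          simp [hmin j hj]
      _ ≤ _ := Finset.sum_le_sum_of_subset (Finset.subset_univ _)

theorem aux_pval {D : Type*} (f : D → ℝ≥0) (q : D → D → ℝ≥0) (fhat : D → ℝ≥0) (S : D → ℝ)
    (m : ℕ) (hprop : PropHyp f q fhat m) (α : ℝ≥0) (d : Fin (m + 1) → D)
    (hd : 0 < wNum q f m 0 d) (hp : pValue q fhat m S d ≤ α) :
    ∑ j, wNum q f m j d * (if S (d 0) ≤ S (d j) then 1 else 0) ≤ α * ∑ j, wNum q f m j d := by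
  obtain ⟨K, hK, hKf⟩ := hprop d ⟨0, by
    have : swapTuple m 0 d = d := by simp [swapTuple]
    rw [this]; exact hd⟩
  have hw : ∀ j, wNum q fhat m j d = K * wNum q f m j d := by
    intro j; simp only [wNum, hKf, mul_assoc]
  have hT : 0 < ∑ j, wNum q f m j d :=
    lt_of_lt_of_le hd (Finset.single_le_sum (f := fun j => wNum q f m j d)
      (fun _ _ => zero_le) (Finset.mem_univ 0))
  have e : pValue q fhat m S d =
      (∑ j, wNum q f m j d * (if S (d 0) ≤ S (d j) then 1 else 0)) / ∑ j, wNum q f m j d := by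
    unfold pValue weight
    simp_rw [hw, ← Finset.mul_sum, mul_div_mul_left _ _ hK.ne']
    rw [Finset.sum_div]
    exact Finset.sum_congr rfl fun j _ => by rw [div_mul_eq_mul_div]
  rw [e, div_le_iff₀ hT] at hp
  exact hp

/-- **Theorem (validity of the weighted MC randomization test).**
Under the proportionality hypothesis `H₀^∝`, the weighted MC randomization
p-value stochastically dominates the uniform distribution. -/
theorem weighted_mc_randomization_test_valid
    {D : Type*} [Countable D]
    (f : D → ℝ≥0) (q : D → D → ℝ≥0) (fhat : D → ℝ≥0) (S : D → ℝ)
    (m : ℕ) (hm : 1 ≤ m)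
    (hf : ∑' d, f d = 1)
    (hq : ∀ d, ∑' e, q e d = 1)
    (hprop : PropHyp f q fhat m) :
    ∀ α : ℝ≥0, α ≤ 1 →
      (∑' d : Fin (m + 1) → D,
        if pValue q fhat m S d ≤ α then jointLaw f q m d else 0) ≤ α := by
  intro α _
  set F : (Fin (m + 1) → D) → ℝ≥0 :=
    fun d => if pValue q fhat m S d ≤ α then jointLaw f q m d else 0 with hF
  by_cases hs : Summable F
  swap
  · rw [tsum_eq_zero_of_not_summable hs]; exact zero_le
  rw [← ENNReal.coe_le_coe, ENNReal.coe_tsum hs]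
  let G : Fin (m + 1) → (Fin (m + 1) → D) → ℝ≥0 := fun i d =>
    if ∑ j, wNum q f m j d * (if S (d i) ≤ S (d j) then 1 else 0) ≤ α * ∑ j, wNum q f m j d
    then wNum q f m i d else 0
  have hFG : ∀ d, F d ≤ G 0 d := by
    intro d
    simp only [hF, G]
    split_ifs with h1 h2
    · exact le_rfl
    · by_contra h3
      exact h2 (aux_pval f q fhat S m hprop α d (pos_iff_ne_zero.2 fun h4 => h3 (le_of_eq h4)) h1)
    · exact zero_le
    · exact le_rfl
  have hsw : ∀ (i : Fin (m + 1)) (u : (Fin (m + 1) → D) → ENNReal),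
      ∑' d, u (d ∘ Equiv.swap 0 i) = ∑' d, u d := fun i u =>
    ((Equiv.swap (0 : Fin (m + 1)) i).arrowCongr (Equiv.refl D)).tsum_eq u
  have hG : ∀ i d, G 0 (d ∘ Equiv.swap 0 i) = G i d := by
    intro i d
    simp only [G, wNum_comp, Function.comp, Equiv.swap_apply_left]
    have a1 := Equiv.sum_comp (Equiv.swap 0 i)
      (fun j => wNum q f m j d * (if S (d i) ≤ S (d j) then (1 : ℝ≥0) else 0))
    have a2 := Equiv.sum_comp (Equiv.swap 0 i) (fun j => wNum q f m j d)
    have a3 : ∀ j, wNum q f m j (fun x => d (Equiv.swap 0 i x))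
      = wNum q f m (Equiv.swap 0 i j) d := fun j => wNum_comp q f m j d _
    simp only [a3, a1, a2, Equiv.swap_apply_left]
  have hGi : ∀ i, ∑' d, (G i d : ENNReal) = ∑' d, (G 0 d : ENNReal) := by
    intro i
    rw [← hsw i (fun d => (G 0 d : ENNReal))]
    simp_rw [hG]
  have hHi : ∀ i, ∑' d, (wNum q f m i d : ENNReal) = 1 := by
    intro i
    rw [← aux_total f q m hf hq, ← hsw i (fun d => (wNum q f m 0 d : ENNReal))]
    simp_rw [wNum_comp, Equiv.swap_apply_left]
  have key : ((m + 1 : ℕ) : ENNReal) * ∑' d, (G 0 d : ENNReal) ≤ ((m + 1 : ℕ) : ENNReal) * α := by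
    calc ((m + 1 : ℕ) : ENNReal) * ∑' d, (G 0 d : ENNReal)
        = ∑ i, ∑' d, (G i d : ENNReal) := by simp [hGi]
      _ = ∑' d, ∑ i, (G i d : ENNReal) :=
          (Summable.tsum_finsetSum fun _ _ => ENNReal.summable).symm
      _ ≤ ∑' d, (α : ENNReal) * ∑ i, (wNum q f m i d : ENNReal) := by
          refine ENNReal.tsum_le_tsum fun d => ?_
          have := aux_det (fun i => wNum q f m i d) (fun i => S (d i)) (α * ∑ j, wNum q f m j d)
          have h5 : ((∑ i, G i d : ℝ≥0) : ENNReal) ≤ ((α * ∑ j, wNum q f m j d : ℝ≥0) : ENNReal) :=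
            ENNReal.coe_le_coe.2 this
          simpa only [ENNReal.coe_mul, ENNReal.coe_finsetSum] using h5
      _ = (α : ENNReal) * ∑ i, ∑' d, (wNum q f m i d : ENNReal) := by
          rw [ENNReal.tsum_mul_left, Summable.tsum_finsetSum fun _ _ => ENNReal.summable]
      _ = ((m + 1 : ℕ) : ENNReal) * α := by simp [hHi, mul_comm]
  refine le_trans (ENNReal.tsum_le_tsum fun d => ENNReal.coe_le_coe.2 (hFG d)) ?_
  exact (ENNReal.mul_le_mul_iff_right (by simp) (by simp)).1 key
end
end

section
/- The swap-orbit sum of the joint density is invariant under swaps: for every tuple (d₀, …, d_m) ∈ 𝒟^(m+1) and every i ∈ {0, …, m}, Σ_{j=0}^m h(σ_j(σ_i(d₀, …, d_m))) = Σ_{j=0}^m h(σ_j(d₀, …, d_m)). (Indeed, the list (h(σ_j(σ_i(d₀,…,d_m))))_{j=0}^m is a rearrangement of the list (h(σ_j(d₀,…,d_m)))_{j=0}^m, obtained by exchanging the entries at positions 0 and i.) -/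
open scoped NNReal BigOperators

noncomputable section

theorem jointLaw_perm {D : Type*} (f : D → ℝ≥0) (q : D → D → ℝ≥0) (m : ℕ)
    (d : Fin (m + 1) → D) (s : Equiv.Perm (Fin (m + 1))) :
    jointLaw f q m (d ∘ s) =
      f (d (s 0)) * ∏ k ∈ Finset.univ.erase (s 0), q (d k) (d (s 0)) := by
  unfold jointLaw
  congr 1
  refine Finset.prod_equiv s ?_ ?_
  · intro k
    simp
  · intro k _
    rfl

/-- **Swap-orbit sums of the joint density are invariant under swaps**: for every
tuple `(d₀, …, d_m)` and every `i`,
`Σ_{j=0}^m h(σ_j(σ_i(d₀, …, d_m))) = Σ_{j=0}^m h(σ_j(d₀, …, d_m))`. -/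
theorem swap_orbit_sum_invariant
    {D : Type*} [Countable D]
    (f : D → ℝ≥0) (q : D → D → ℝ≥0) (m : ℕ) (hm : 1 ≤ m)
    (hf : ∑' d, f d = 1)
    (hq : ∀ d, ∑' e, q e d = 1)
    (d : Fin (m + 1) → D) (i : Fin (m + 1)) :
    ∑ j, jointLaw f q m (swapTuple m j (swapTuple m i d)) =
      ∑ j, jointLaw f q m (swapTuple m j d) := by
  refine Fintype.sum_equiv (Equiv.swap 0 i) _ _ ?_
  intro j
  have h1 := jointLaw_perm f q m d ((Equiv.swap 0 j).trans (Equiv.swap 0 i))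
  have h2 := jointLaw_perm f q m d (Equiv.swap 0 (Equiv.swap 0 i j))
  simp only [Equiv.trans_apply, Equiv.swap_apply_left] at h1 h2
  exact h1.trans h2.symm
end
end

section
/- (Deterministic weighted p-value lemma.) Let m ≥ 0 be an integer, let w₀, …, w_m be nonnegative reals with Σ_{i=0}^m w_i = 1, and let s₀, …, s_m be reals. Define p_i = Σ_{j=0}^m w_j · 1[s_j ≥ s_i] for each i ∈ {0, …, m}. Then for every real α ≥ 0, Σ_{i ∈ {0,…,m} : p_i ≤ α} w_i ≤ α. -/
open scoped BigOperators Classical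

/-- **(Deterministic weighted p-value lemma.)** Let `w₀, …, w_m` be nonnegative
reals summing to `1` and `s₀, …, s_m` reals. With
`p_i = Σ_j w_j · 1[s_j ≥ s_i]`, for every `α ≥ 0` the total weight of indices
with `p_i ≤ α` is at most `α`. -/
theorem deterministic_weighted_pvalue_lemma
    (m : ℕ) (w : Fin (m + 1) → ℝ) (s : Fin (m + 1) → ℝ)
    (hw : ∀ i, 0 ≤ w i) (hsum : ∑ i, w i = 1)
    (p : Fin (m + 1) → ℝ)
    (hp : ∀ i, p i = ∑ j, w j * (if s i ≤ s j then 1 else 0)) :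
    ∀ α : ℝ, 0 ≤ α →
      ∑ i ∈ Finset.univ.filter (fun i => p i ≤ α), w i ≤ α := by
  intro α hα
  rcases (Finset.univ.filter (fun i => p i ≤ α)).eq_empty_or_nonempty with he | hne
  · rw [he]; simpa using hα
  · obtain ⟨k, hk, hmin⟩ := Finset.exists_min_image _ s hne
    have hk2 : p k ≤ α := (Finset.mem_filter.mp hk).2
    refine le_trans ?_ hk2
    rw [hp k]
    calc ∑ i ∈ Finset.univ.filter (fun i => p i ≤ α), w i
        = ∑ i ∈ Finset.univ.filter (fun i => p i ≤ α),
            w i * (if s k ≤ s i then 1 else 0) := by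
          refine Finset.sum_congr rfl fun i hi => ?_
          rw [if_pos (hmin i hi), mul_one]
      _ ≤ _ := by
          refine Finset.sum_le_sum_of_subset_of_nonneg (Finset.filter_subset _ _) ?_
          intro i _ _
          refine mul_nonneg (hw i) ?_
          split_ifs <;> norm_num
end

section
/- (Deterministic core of the smoothed/randomized test.) Let m ≥ 0 be an integer, let w₀, …, w_m be nonnegative reals with Σ_{i=0}^m w_i = 1, and let s₀, …, s_m be reals. Define p_i = Σ_{j=0}^m w_j · 1[s_j ≥ s_i] and p_i⁻ = Σ_{j=0}^m w_j · 1[s_j > s_i]. Fix α ∈ [0,1] and define r_i = 1 if p_i ≤ α; r_i = (α − p_i⁻)/(p_i − p_i⁻) if p_i⁻ ≤ α < p_i; and r_i = 0 if α < p_i⁻. Then Σ_{i=0}^m w_i · r_i = α. -/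
open scoped BigOperators Classical

/-- **(Deterministic core of the smoothed/randomized test.)** With nonnegative
weights `w` summing to `1`, scores `s`, `p_i = Σ_j w_j · 1[s_j ≥ s_i]`,
`p_i⁻ = Σ_j w_j · 1[s_j > s_i]`, and conditional rejection probabilities
`r_i = 1` if `p_i ≤ α`, `r_i = (α − p_i⁻)/(p_i − p_i⁻)` if `p_i⁻ ≤ α < p_i`,
and `r_i = 0` if `α < p_i⁻`, one has `Σ_i w_i · r_i = α`. -/
theorem deterministic_smoothed_pvalue_lemma
    (m : ℕ) (w : Fin (m + 1) → ℝ) (s : Fin (m + 1) → ℝ)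
    (hw : ∀ i, 0 ≤ w i) (hsum : ∑ i, w i = 1)
    (α : ℝ) (hα0 : 0 ≤ α) (hα1 : α ≤ 1)
    (p pminus r : Fin (m + 1) → ℝ)
    (hp : ∀ i, p i = ∑ j, w j * (if s i ≤ s j then 1 else 0))
    (hpminus : ∀ i, pminus i = ∑ j, w j * (if s i < s j then 1 else 0))
    (hr : ∀ i, r i =
      if p i ≤ α then 1
      else if pminus i ≤ α then (α - pminus i) / (p i - pminus i)
      else 0) :
    ∑ i, w i * r i = α := by
  have mono : ∀ i j, s j < s i → p i ≤ pminus j := by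
    intro i j h
    rw [hp, hpminus]
    refine Finset.sum_le_sum fun k _ => mul_le_mul_of_nonneg_left ?_ (hw k)
    by_cases h1 : s i ≤ s k
    · rw [if_pos h1, if_pos (lt_of_lt_of_le h h1)]
    · rw [if_neg h1]
      split_ifs <;> norm_num
  by_cases hall : ∀ i, p i ≤ α
  · obtain ⟨i0, -, hi0⟩ := Finset.exists_min_image Finset.univ s ⟨0, Finset.mem_univ _⟩
    have h1 : p i0 = 1 := by
      rw [hp]
      refine Eq.trans ?_ hsum
      refine Finset.sum_congr rfl fun j hj => ?_
      rw [if_pos (hi0 j hj), mul_one]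
    have h2 : α = 1 := le_antisymm hα1 (h1 ▸ hall i0)
    rw [h2, ← hsum]
    refine Finset.sum_congr rfl fun j hj => ?_
    rw [hr, if_pos (hall j), mul_one]
  · push Not at hall
    obtain ⟨k, hk⟩ := hall
    obtain ⟨i0, hi0m, hi0⟩ := Finset.exists_max_image
      (Finset.univ.filter fun i => α < p i) s ⟨k, by simpa using hk⟩
    have hi0p : α < p i0 := by simpa using hi0m
    have hgt : ∀ j, s i0 < s j → p j ≤ α := by
      intro j hj
      by_contra hc
      have := hi0 j (by simpa using hc)
      linarith
    have hpm : pminus i0 ≤ α := by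
      by_cases hne : (Finset.univ.filter fun j => s i0 < s j).Nonempty
      · obtain ⟨j1, hj1m, hj1⟩ := Finset.exists_min_image _ s hne
        have hj1' : s i0 < s j1 := by simpa using hj1m
        refine le_trans ?_ (hgt j1 hj1')
        rw [hp, hpminus]
        refine Finset.sum_le_sum fun k _ => mul_le_mul_of_nonneg_left ?_ (hw k)
        by_cases h1 : s i0 < s k
        · rw [if_pos h1, if_pos (hj1 k (by simpa using h1))]
        · rw [if_neg h1]
          split_ifs <;> norm_num
      · rw [hpminus]
        refine le_trans (le_of_eq ?_) hα0
        refine Finset.sum_eq_zero fun j _ => ?_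
        rw [if_neg, mul_zero]
        intro h
        exact hne ⟨j, by simpa using h⟩
    have hd : p i0 - pminus i0 ≠ 0 := by
      have : 0 < p i0 - pminus i0 := by linarith
      exact this.ne'
    have key : ∀ j, w j * r j = w j * (if s i0 < s j then 1 else 0)
        + (α - pminus i0) / (p i0 - pminus i0) *
          (w j * (if s i0 ≤ s j then 1 else 0) - w j * (if s i0 < s j then 1 else 0)) := by
      intro j
      rcases lt_trichotomy (s i0) (s j) with h | h | h
      · rw [hr, if_pos (hgt j h), if_pos h, if_pos h.le]; ring
      · have e1 : p j = p i0 := by rw [hp, hp, h]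
        have e2 : pminus j = pminus i0 := by rw [hpminus, hpminus, h]
        rw [hr, e1, e2, if_neg (not_le.2 hi0p), if_pos hpm, if_neg (not_lt.2 h.ge), if_pos h.le]
        ring
      · have h1 : α < pminus j := lt_of_lt_of_le hi0p (mono i0 j h)
        have h2 : pminus j ≤ p j := by
          rw [hp, hpminus]
          refine Finset.sum_le_sum fun k _ => mul_le_mul_of_nonneg_left ?_ (hw k)
          by_cases h1 : s j < s k
          · rw [if_pos h1, if_pos h1.le]
          · rw [if_neg h1]
            split_ifs <;> norm_num
        rw [hr, if_neg (not_le.2 (lt_of_lt_of_le h1 h2)), if_neg (not_le.2 h1),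
          if_neg (not_lt.2 h.le), if_neg (not_le.2 h)]
        ring
    rw [Finset.sum_congr rfl fun j _ => key j, Finset.sum_add_distrib, ← Finset.mul_sum,
      Finset.sum_sub_distrib, ← hp, ← hpminus, div_mul_cancel₀ _ hd]
    ring
end

section
/- (Proposition 1, Environments 1 and 2: non-reactive environment and MDP, identity permutation.) Suppose the law of the data has probability mass function f(d) = ∏_{t=1}^T pC_t(c_t; (c₁,y₁), …, (c_{t−1},y_{t−1})) · a_t(x_t; c_t, h_{t−1}(d)) · r_t(y_t; c_t, x_t), where pC_t : 𝒞 × (𝒞×𝒴)^(t−1) → ℝ≥0 is the context law at time t, depending only on past contexts and responses (weak non-reactivity), and r_t : 𝒴 × 𝒞 × 𝒳 → ℝ≥0 is the response law at time t (Markovianity). Assume the null hypothesis H₀^{⊥⊥,g}: for all t, all y ∈ 𝒴, c ∈ 𝒞, and all x, x' ∈ 𝒳 with g(x) = g(x'), r_t(y; c, x) = r_t(y; c, x'). Fix a trajectory d. Then for every trajectory d̃ with c̃_t = c_t, ỹ_t = y_t, and g(x̃_t) = g(x_t) for all t ∈ {1, …, T}, one has f(d̃) = K(d) · f̂(d̃),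 where K(d) = ∏_{t=1}^T pC_t(c_t; (c₁,y₁), …, (c_{t−1},y_{t−1})) · r_t(y_t; c_t, x_t) depends only on d (not on d̃). In particular, the unnormalized likelihood f̂ is proportional to f across all such resamples d̃ with a common constant of proportionality. -/
open scoped NNReal BigOperators

noncomputable section

variable {C X Y G : Type*}

/-- Embedding of an index `s < t` into `Fin T`. -/
def emb {T : ℕ} (t : Fin T) (s : Fin (t : ℕ)) : Fin T :=
  ⟨(s : ℕ), lt_trans s.isLt t.isLt⟩

/-- The history `h_{t−1}(d)`: the prefix of the trajectory strictly before time `t`. -/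
def hist {T : ℕ} (d : Fin T → C × X × Y) (t : Fin T) : Fin (t : ℕ) → C × X × Y :=
  fun s => d (emb t s)

/-- The context-response prefix `((c₁,y₁), …, (c_{t−1},y_{t−1}))`. -/
def cyHist {T : ℕ} (d : Fin T → C × X × Y) (t : Fin T) : Fin (t : ℕ) → C × Y :=
  fun s => ((d (emb t s)).1, (d (emb t s)).2.2)

/-- The unnormalized assignment likelihood
`f̂(d) = ∏_{t=1}^T a_t(x_t; c_t, h_{t−1}(d))`. -/
def assignLik {T : ℕ} (a : (t : Fin T) → X → C → (Fin (t : ℕ) → C × X × Y) → ℝ≥0)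
    (d : Fin T → C × X × Y) : ℝ≥0 :=
  ∏ t, a t (d t).2.1 (d t).1 (hist d t)

/-- The full data law in a non-reactive (weakly non-reactive, Markovian)
environment: `f(d) = ∏_t pC_t(c_t; (c,y)-prefix) · a_t(x_t; c_t, h_{t−1}) ·
r_t(y_t; c_t, x_t)`. -/
def trajLaw {T : ℕ}
    (pC : (t : Fin T) → C → (Fin (t : ℕ) → C × Y) → ℝ≥0)
    (a : (t : Fin T) → X → C → (Fin (t : ℕ) → C × X × Y) → ℝ≥0)
    (r : Fin T → Y → C → X → ℝ≥0)
    (d : Fin T → C × X × Y) : ℝ≥0 :=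
  ∏ t, pC t (d t).1 (cyHist d t) * a t (d t).2.1 (d t).1 (hist d t) *
    r t (d t).2.2 (d t).1 (d t).2.1

/-- **(Proposition 1, Environments 1 and 2: identity permutation.)** Under the
conditional independence null `H₀^{⊥⊥,g}`, for any resample `d̃` with the same
contexts, responses, and `g`-evaluations of actions as `d`, one has
`f(d̃) = K(d) · f̂(d̃)` with `K(d)` depending only on `d`. -/
theorem prop1_nonreactive_identity
    [Countable C] [Countable X] [Countable Y]
    (T : ℕ) (hT : 1 ≤ T)
    (pC : (t : Fin T) → C → (Fin (t : ℕ) → C × Y) → ℝ≥0)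
    (a : (t : Fin T) → X → C → (Fin (t : ℕ) → C × X × Y) → ℝ≥0)
    (r : Fin T → Y → C → X → ℝ≥0)
    (g : X → G)
    (hnull : ∀ (t : Fin T) (y : Y) (c : C) (x x' : X),
      g x = g x' → r t y c x = r t y c x')
    (d : Fin T → C × X × Y) :
    ∀ dtil : Fin T → C × X × Y,
      (∀ t, (dtil t).1 = (d t).1 ∧ (dtil t).2.2 = (d t).2.2 ∧
        g (dtil t).2.1 = g (d t).2.1) →
      trajLaw pC a r dtil =
        (∏ t, pC t (d t).1 (cyHist d t) * r t (d t).2.2 (d t).1 (d t).2.1) *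
          assignLik a dtil := by
  intro dtil h
  have hcy : ∀ t, cyHist dtil t = cyHist d t := by
    intro t
    funext s
    simp only [cyHist, (h (emb t s)).1, (h (emb t s)).2.1]
  unfold trajLaw assignLik
  rw [← Finset.prod_mul_distrib]
  refine Finset.prod_congr rfl fun t _ => ?_
  obtain ⟨h1, h2, h3⟩ := h t
  rw [hcy t, h1, h2, hnull t _ _ _ _ h3]
  ring
end
end

section
/- (Proposition 1, Environment 3: stationary non-reactive environment, arbitrary permutations.) Suppose the law of the data has the stationary factorization f(d) = ∏_{t=1}^T pC(c_t) · a_t(x_t; c_t, h_{t−1}(d)) · r(y_t; c_t, x_t), where pC : 𝒞 → ℝ≥0 is the (time-invariant) context law and r : 𝒴 × 𝒞 × 𝒳 → ℝ≥0 is the (time-invariant) response law. Assume the null hypothesis H₀^{⊥⊥,g}: for all y ∈ 𝒴, c ∈ 𝒞, and all x, x' ∈ 𝒳 with g(x) = g(x'), r(y; c, x) = r(y; c, x'). Fix a trajectory d. Then for every permutation π of {1, …, T} and every trajectory d̃ with (c̃_t, g(x̃_t), ỹ_t) = (c_{π(t)}, g(x_{π(t)}), y_{π(t)}) for all t ∈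 {1, …, T}, one has f(d̃) = K(d) · f̂(d̃), where K(d) = ∏_{t=1}^T pC(c_t) · r(y_t; c_t, x_t) depends only on d (not on π or d̃). -/
open scoped NNReal BigOperators

noncomputable section

variable {C X Y G : Type*}

/-- The data law in a stationary non-reactive environment:
`f(d) = ∏_t pC(c_t) · a_t(x_t; c_t, h_{t−1}(d)) · r(y_t; c_t, x_t)`. -/
def statTrajLaw {T : ℕ}
    (pC : C → ℝ≥0)
    (a : (t : Fin T) → X → C → (Fin (t : ℕ) → C × X × Y) → ℝ≥0)
    (r : Y → C → X → ℝ≥0)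
    (d : Fin T → C × X × Y) : ℝ≥0 :=
  ∏ t, pC (d t).1 * a t (d t).2.1 (d t).1 (hist d t) *
    r (d t).2.2 (d t).1 (d t).2.1

/-- **(Proposition 1, Environment 3: stationary non-reactive environment,
arbitrary permutations.)** Under the null `H₀^{⊥⊥,g}`, for any permutation `π`
of the timesteps and any resample `d̃` agreeing with the `π`-permuted data in
contexts, responses, and `g`-evaluations of actions, one has
`f(d̃) = K(d) · f̂(d̃)` with `K(d)` depending only on `d`. -/
theorem prop1_stationary_nonreactive_permutation
    [Countable C] [Countable X] [Countable Y]
    (T : ℕ) (hT : 1 ≤ T)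
    (pC : C → ℝ≥0)
    (a : (t : Fin T) → X → C → (Fin (t : ℕ) → C × X × Y) → ℝ≥0)
    (r : Y → C → X → ℝ≥0)
    (g : X → G)
    (hnull : ∀ (y : Y) (c : C) (x x' : X), g x = g x' → r y c x = r y c x')
    (d : Fin T → C × X × Y) :
    ∀ (π : Equiv.Perm (Fin T)) (dtil : Fin T → C × X × Y),
      (∀ t, (dtil t).1 = (d (π t)).1 ∧ g (dtil t).2.1 = g (d (π t)).2.1 ∧
        (dtil t).2.2 = (d (π t)).2.2) →
      statTrajLaw pC a r dtil =
        (∏ t, pC (d t).1 * r (d t).2.2 (d t).1 (d t).2.1) *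
          assignLik a dtil := by
  intro π dtil h
  have hK : (∏ t, pC (d t).1 * r (d t).2.2 (d t).1 (d t).2.1) =
      ∏ t, pC (dtil t).1 * r (dtil t).2.2 (dtil t).1 (dtil t).2.1 := by
    rw [← Equiv.prod_comp π]
    refine Finset.prod_congr rfl fun t _ => ?_
    obtain ⟨h1, h2, h3⟩ := h t
    rw [hnull _ _ _ _ h2, h1, h3]
  rw [hK, statTrajLaw, assignLik, ← Finset.prod_mul_distrib]
  exact Finset.prod_congr rfl fun t _ => by ring
end
end

section
/- (Generalization without the Markovianity assumption, Appendix C.2.) Suppose the law of the data has the fully general factorization f(d) = ∏_{t=1}^T pC_t(c_t; h_{t−1}(d)) · a_t(x_t; c_t, h_{t−1}(d)) · r_t(y_t; c_t, x_t, h_{t−1}(d)), where pC_t is the context law at time t given the full history and r_t is the response law at time t given the current context, current action, and full history. Let g₁, …, g_T : 𝒳 → G and assume the null hypothesis: pC_t and r_t depend on actions only through their g-evaluations; precisely, whenever two histories h = ((c₁,x₁,y₁),…,(c_{t−1},x_{t−1},y_{t−1})) and h' = ((c₁,x'₁,y₁),…,(c_{t−1},x'_{t−1},y_{t−1})) have identical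 context and response sequences and satisfy g_s(x_s) = g_s(x'_s) for all s ≤ t−1, then pC_t(c; h) = pC_t(c; h') for every c ∈ 𝒞, and moreover r_t(y; c, x_t, h) = r_t(y; c, x'_t, h') for every y ∈ 𝒴, c ∈ 𝒞 and every pair of current actions x_t, x'_t with g_t(x_t) = g_t(x'_t). Fix a trajectory d. Then for every trajectory d̃ with c̃_t = c_t, ỹ_t = y_t, and g_t(x̃_t) = g_t(x_t) for all t ∈ {1, …, T}, one has f(d̃) = K(d) · f̂(d̃), where K(d) = ∏_{t=1}^T pC_t(c_t; h_{t−1}(d)) · r_t(y_t; c_t, x_t, h_{t−1}(d)) depends only on d. -/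
open scoped NNReal BigOperators

noncomputable section

variable {C X Y G : Type*}

/-- The fully general (non-Markovian) data law:
`f(d) = ∏_t pC_t(c_t; h_{t−1}(d)) · a_t(x_t; c_t, h_{t−1}(d)) ·
r_t(y_t; c_t, x_t, h_{t−1}(d))`. -/
def genTrajLaw {T : ℕ}
    (pC : (t : Fin T) → C → (Fin (t : ℕ) → C × X × Y) → ℝ≥0)
    (a : (t : Fin T) → X → C → (Fin (t : ℕ) → C × X × Y) → ℝ≥0)
    (r : (t : Fin T) → Y → C → X → (Fin (t : ℕ) → C × X × Y) → ℝ≥0)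
    (d : Fin T → C × X × Y) : ℝ≥0 :=
  ∏ t, pC t (d t).1 (hist d t) * a t (d t).2.1 (d t).1 (hist d t) *
    r t (d t).2.2 (d t).1 (d t).2.1 (hist d t)

/-- **(Generalization without the Markovianity assumption, Appendix C.2.)**
If the context and response laws depend on past actions only through their
`g`-evaluations, then any resample `d̃` with the same contexts, responses, and
`g_t`-evaluations of actions as `d` satisfies `f(d̃) = K(d) · f̂(d̃)`. -/
theorem general_non_markov_proportionality
    [Countable C] [Countable X] [Countable Y]
    (T : ℕ) (hT : 1 ≤ T)
    (pC : (t : Fin T) → C → (Fin (t : ℕ) → C × X × Y) → ℝ≥0)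
    (a : (t : Fin T) → X → C → (Fin (t : ℕ) → C × X × Y) → ℝ≥0)
    (r : (t : Fin T) → Y → C → X → (Fin (t : ℕ) → C × X × Y) → ℝ≥0)
    (g : Fin T → X → G)
    (hnull : ∀ (t : Fin T) (h h' : Fin (t : ℕ) → C × X × Y),
      (∀ s, (h s).1 = (h' s).1 ∧ (h s).2.2 = (h' s).2.2 ∧
        g (emb t s) (h s).2.1 = g (emb t s) (h' s).2.1) →
      (∀ c, pC t c h = pC t c h') ∧
      (∀ (y : Y) (c : C) (x x' : X),
        g t x = g t x' → r t y c x h = r t y c x' h'))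
    (d : Fin T → C × X × Y) :
    ∀ dtil : Fin T → C × X × Y,
      (∀ t, (dtil t).1 = (d t).1 ∧ (dtil t).2.2 = (d t).2.2 ∧
        g t (dtil t).2.1 = g t (d t).2.1) →
      genTrajLaw pC a r dtil =
        (∏ t, pC t (d t).1 (hist d t) *
          r t (d t).2.2 (d t).1 (d t).2.1 (hist d t)) *
          assignLik a dtil := by
  intro dtil hd
  unfold genTrajLaw assignLik
  rw [← Finset.prod_mul_distrib]
  refine Finset.prod_congr rfl fun t _ => ?_
  obtain ⟨hp, hr⟩ := hnull t (hist dtil t) (hist d t) (fun s => hd (emb t s))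
  obtain ⟨h1, h2, h3⟩ := hd t
  rw [hp, hr _ _ _ _ h3, h2, h1]
  ring
end
end

section
/- (Validity of the non-stationarity test / marginal conformal coverage in a C-stationary strongly non-reactive environment.) Suppose the law of the data D over trajectories has probability mass function f(d) = ∏_{t=1}^T pC(c_t) · a_t(x_t; c_t, h_{t−1}(d)) · r(y_t; c_t, x_t), where pC : 𝒞 → ℝ≥0 is the (time-invariant) context law and r : 𝒴 × 𝒞 × 𝒳 → ℝ≥0 is a response law not depending on t (the non-stationarity null H₀^S). Take f̂(d) = ∏_{t=1}^T a_t(x_t; c_t, h_{t−1}(d)), and let q be any resampling distribution each of whose draws is a permutation of the observed trajectory: q(d̃ | d) > 0 implies there exists a permutation π of {1, …, T} with d̃_t = d_{π(t)} for all t. Then for every α ∈ [0,1], the weighted MC randomization p-value is valid: Σ_{(d₀,…,d_m) : p(d₀,…,d_m) ≤ α} h(d₀,…,d_m) ≤ α. Equivalently, the conformal prediction set C^α(D) = {y ∈ 𝒴 : the p-value computed on D with its final response Y_T replaced by y exceeds α} contains the realized final response Y_T with probability at least 1 − α. -/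
open scoped NNReal Classical BigOperators

noncomputable section

/-! Trajectory machinery. -/

variable {C X Y : Type*}

lemma aux_tsum_prod {D : Type*} (u : D → ENNReal) (n : ℕ) :
    ∑' d : Fin n → D, ∏ k, u (d k) = (∑' e, u e) ^ n := by
  induction n with
  | zero => simp [tsum_fintype]
  | succ n ih =>
    rw [← (Fin.consEquiv (fun _ : Fin (n + 1) => D)).tsum_eq, ENNReal.tsum_prod']
    simp only [Fin.consEquiv, Equiv.coe_fn_mk, Fin.prod_univ_succ, Fin.cons_zero, Fin.cons_succ]
    simp_rw [ENNReal.tsum_mul_left, ih, ENNReal.tsum_mul_right]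
    rw [pow_succ, mul_comm]

lemma aux_joint_sum {D : Type*} (f : D → ℝ≥0) (q : D → D → ℝ≥0) (m : ℕ)
    (hf : ∑' d, (f d : ENNReal) = 1) (hq : ∀ d, ∑' e, (q e d : ENNReal) = 1) :
    ∑' dd : Fin (m + 1) → D, (wNum q f m 0 dd : ENNReal) = 1 := by
  rw [← (Fin.consEquiv (fun _ : Fin (m + 1) => D)).tsum_eq, ENNReal.tsum_prod']
  have h : ∀ (x : D) (y : Fin m → D),
      ((wNum q f m 0 (Fin.consEquiv (fun _ : Fin (m + 1) => D) (x, y)) : ℝ≥0) : ENNReal)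
        = (f x : ENNReal) * ∏ k, (q (y k) x : ENNReal) := by
    intro x y
    have he : (Finset.univ.erase (0 : Fin (m + 1))) = Finset.univ.map (Fin.succEmb m) := by
      ext k
      refine Fin.cases ?_ (fun k => ?_) k <;> simp [Fin.succ_ne_zero]
    simp only [wNum, he, Finset.prod_map]
    simp [Fin.consEquiv]
  simp_rw [h, ENNReal.tsum_mul_left]
  rw [← hf]
  refine tsum_congr fun x => ?_
  rw [aux_tsum_prod (fun e => (q e x : ENNReal)), hq, one_pow, mul_one]

lemma aux_wNum_swap {D : Type*} (q : D → D → ℝ≥0) (f : D → ℝ≥0) (m : ℕ)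
    (σ : Equiv.Perm (Fin (m + 1))) (i : Fin (m + 1)) (d : Fin (m + 1) → D) :
    wNum q f m i (d ∘ σ) = wNum q f m (σ i) d := by
  unfold wNum
  congr 1
  refine Finset.prod_equiv σ ?_ ?_
  · intro k; simp
  · intro k _; rfl

/-- p-value with reference index `i`. -/
def auxP {D : Type*} (q : D → D → ℝ≥0) (fhat : D → ℝ≥0) (m : ℕ)
    (S : D → ℝ) (i : Fin (m + 1)) (d : Fin (m + 1) → D) : ℝ≥0 :=
  ∑ j, weight q fhat m j d * (if S (d i) ≤ S (d j) then 1 else 0)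

lemma aux_pValue_swap {D : Type*} (q : D → D → ℝ≥0) (f : D → ℝ≥0) (m : ℕ) (S : D → ℝ)
    (σ : Equiv.Perm (Fin (m + 1))) (d : Fin (m + 1) → D) :
    pValue q f m S (d ∘ σ) = auxP q f m S (σ 0) d := by
  unfold pValue auxP weight
  simp_rw [aux_wNum_swap]
  rw [Equiv.sum_comp σ (fun j => wNum q f m j d)]
  exact Equiv.sum_comp σ (fun j => wNum q f m j d / (∑ j, wNum q f m j d) *
    (if S (d (σ 0)) ≤ S (d j) then 1 else 0))

lemma aux_pointwise {D : Type*} (q : D → D → ℝ≥0) (f : D → ℝ≥0) (m : ℕ) (S : D → ℝ)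
    (d : Fin (m + 1) → D) (α : ℝ≥0) :
    ∑ i, (if auxP q f m S i d ≤ α then wNum q f m i d else 0) ≤ α * ∑ i, wNum q f m i d := by
  rcases eq_or_ne (∑ i, wNum q f m i d) 0 with h0 | h0
  · refine le_trans (b := ∑ i, wNum q f m i d) ?_ (by rw [h0]; simp)
    exact Finset.sum_le_sum fun i _ => by split_ifs <;> simp
  rw [← Finset.sum_filter]
  rcases (Finset.univ.filter (fun i => auxP q f m S i d ≤ α)).eq_empty_or_nonempty with he | hne
  · rw [he]; simp
  obtain ⟨i, hi, hmin⟩ := Finset.exists_min_image _ (fun i => S (d i)) hne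
  have hi' : auxP q f m S i d ≤ α := (Finset.mem_filter.mp hi).2
  have key : auxP q f m S i d * ∑ i, wNum q f m i d
      = ∑ j, (if S (d i) ≤ S (d j) then wNum q f m j d else 0) := by
    unfold auxP weight
    rw [Finset.sum_mul]
    refine Finset.sum_congr rfl fun j _ => ?_
    split_ifs
    · rw [mul_one, div_mul_cancel₀ _ h0]
    · simp
  refine le_trans ?_ (mul_le_mul_left hi' _)
  rw [key, ← Finset.sum_filter]
  refine Finset.sum_le_sum_of_subset ?_
  intro j hj
  simpa using hmin j hj

lemma aux_factor {D : Type*} (q : D → D → ℝ≥0) (f fhat g : D → ℝ≥0) (m : ℕ)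
    (hfg : ∀ d, f d = g d * fhat d) (hg : ∀ d e, 0 < q e d → g e = g d)
    (i : Fin (m + 1)) (d : Fin (m + 1) → D) :
    wNum q f m i d = g (d 0) * wNum q fhat m i d := by
  unfold wNum
  by_cases hi : i = 0
  · subst hi; rw [hfg, mul_assoc]
  by_cases hz : q (d 0) (d i) = 0
  · rw [Finset.prod_eq_zero (i := (0 : Fin (m + 1))) (by simp [Ne.symm hi]) hz]; simp
  · rw [hg _ _ (pos_iff_ne_zero.mpr hz), hfg, mul_assoc]

lemma aux_main {D : Type*} (q : D → D → ℝ≥0) (f fhat g : D → ℝ≥0) (m : ℕ) (S : D → ℝ)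
    (hfg : ∀ d, f d = g d * fhat d) (hg : ∀ d e, 0 < q e d → g e = g d)
    (hf : ∑' d, (f d : ENNReal) = 1) (hq : ∀ d, ∑' e, (q e d : ENNReal) = 1) (α : ℝ≥0) :
    ∑' dd : Fin (m + 1) → D,
      ((if pValue q fhat m S dd ≤ α then wNum q f m 0 dd else 0 : ℝ≥0) : ENNReal) ≤ α := by
  set A := ∑' dd : Fin (m + 1) → D,
      ((if pValue q fhat m S dd ≤ α then wNum q f m 0 dd else 0 : ℝ≥0) : ENNReal) with hA
  have e1 : ∀ i : Fin (m + 1), ∑' dd : Fin (m + 1) → D,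
      ((if auxP q fhat m S i dd ≤ α then wNum q f m i dd else 0 : ℝ≥0) : ENNReal) = A := by
    intro i
    rw [hA, ← (Equiv.arrowCongr (Equiv.swap 0 i) (Equiv.refl D)).tsum_eq
      (fun dd => ((if pValue q fhat m S dd ≤ α then wNum q f m 0 dd else 0 : ℝ≥0) : ENNReal))]
    refine tsum_congr fun dd => ?_
    have : (Equiv.arrowCongr (Equiv.swap 0 i) (Equiv.refl D)) dd = dd ∘ (Equiv.swap 0 i) := by
      ext k; simp [Equiv.arrowCongr]
    rw [this, aux_pValue_swap, aux_wNum_swap, Equiv.swap_apply_left]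
  have e2 : ∀ i : Fin (m + 1), ∑' dd : Fin (m + 1) → D, (wNum q f m i dd : ENNReal) = 1 := by
    intro i
    rw [← aux_joint_sum f q m hf hq,
      ← (Equiv.arrowCongr (Equiv.swap 0 i) (Equiv.refl D)).tsum_eq
        (fun dd => (wNum q f m 0 dd : ENNReal))]
    refine tsum_congr fun dd => ?_
    have : (Equiv.arrowCongr (Equiv.swap 0 i) (Equiv.refl D)) dd = dd ∘ (Equiv.swap 0 i) := by
      ext k; simp [Equiv.arrowCongr]
    rw [this, aux_wNum_swap, Equiv.swap_apply_left]
  have h1 : ∑ _i : Fin (m + 1), A ≤ α * ∑ _i : Fin (m + 1), (1 : ENNReal) := by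
    rw [← Finset.sum_congr rfl (fun i _ => e1 i), ← Finset.sum_congr rfl (fun i _ => e2 i),
      ← Summable.tsum_finsetSum (fun _ _ => ENNReal.summable),
      ← Summable.tsum_finsetSum (fun _ _ => ENNReal.summable), ← ENNReal.tsum_mul_left]
    refine ENNReal.tsum_le_tsum fun dd => ?_
    have := mul_le_mul_right (aux_pointwise q fhat m S dd α) (g (dd 0))
    simp_rw [aux_factor q f fhat g m hfg hg]
    norm_cast
    calc _ = g (dd 0) * ∑ i, (if auxP q fhat m S i dd ≤ α then wNum q fhat m i dd else 0) := by
          rw [Finset.mul_sum]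
          exact Finset.sum_congr rfl fun i _ => by split_ifs <;> simp
      _ ≤ _ := this
      _ = _ := by rw [← Finset.mul_sum]; ring
  simp only [Finset.sum_const, Finset.card_univ, Fintype.card_fin, nsmul_eq_mul, mul_one] at h1
  rw [mul_comm (α : ENNReal)] at h1
  exact (ENNReal.mul_le_mul_iff_right (by simp) (ENNReal.natCast_ne_top _)).mp h1

lemma aux_coe {D : Type*} (u : D → ℝ≥0) (h : ∑' d, u d = 1) :
    ∑' d, (u d : ENNReal) = 1 := by
  have hs : Summable u := by
    by_contra hs
    rw [tsum_eq_zero_of_not_summable hs] at h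
    exact zero_ne_one h
  rw [← ENNReal.coe_tsum hs, h, ENNReal.coe_one]

/-- **(Validity of the non-stationarity test / marginal conformal coverage in a
`C`-stationary strongly non-reactive environment.)** With `f̂ = assignLik a` and
a resampling distribution `q` supported on permutations of the observed
trajectory, the weighted MC randomization p-value is valid under `H₀^S`. -/
theorem nonstationarity_test_valid
    [Countable C] [Countable X] [Countable Y]
    (T : ℕ) (hT : 1 ≤ T)
    (pC : C → ℝ≥0)
    (a : (t : Fin T) → X → C → (Fin (t : ℕ) → C × X × Y) → ℝ≥0)
    (r : Y → C → X → ℝ≥0)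
    (q : (Fin T → C × X × Y) → (Fin T → C × X × Y) → ℝ≥0)
    (m : ℕ) (hm : 1 ≤ m)
    (S : (Fin T → C × X × Y) → ℝ)
    (hf : ∑' d, statTrajLaw pC a r d = 1)
    (hq : ∀ d, ∑' e, q e d = 1)
    (hperm : ∀ d dtil, 0 < q dtil d →
      ∃ π : Equiv.Perm (Fin T), ∀ t, dtil t = d (π t)) :
    ∀ α : ℝ≥0, α ≤ 1 →
      (∑' dd : Fin (m + 1) → (Fin T → C × X × Y),
        if pValue q (assignLik a) m S dd ≤ α then
          jointLaw (statTrajLaw pC a r) q m dd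
        else 0) ≤ α := by
  intro α _
  have main := aux_main q (statTrajLaw pC a r) (assignLik a)
    (fun d => ∏ t, pC (d t).1 * r (d t).2.2 (d t).1 (d t).2.1) m S
    (by
      intro d
      unfold statTrajLaw assignLik
      rw [← Finset.prod_mul_distrib]
      exact Finset.prod_congr rfl fun t _ => by ring)
    (by
      intro d e h
      obtain ⟨π, hπ⟩ := hperm d e h
      simp only [hπ]
      exact Equiv.prod_comp π (fun t => pC (d t).1 * r (d t).2.2 (d t).1 (d t).2.1))
    (aux_coe _ hf) (fun d => aux_coe _ (hq d)) α
  change (∑' dd : Fin (m + 1) → (Fin T → C × X × Y),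
        if pValue q (assignLik a) m S dd ≤ α then
          wNum q (statTrajLaw pC a r) m 0 dd else 0) ≤ α
  by_cases hs : Summable (fun dd : Fin (m + 1) → (Fin T → C × X × Y) =>
        if pValue q (assignLik a) m S dd ≤ α then
          wNum q (statTrajLaw pC a r) m 0 dd else 0)
  · rw [← ENNReal.coe_tsum hs] at main
    exact_mod_cast main
  · rw [tsum_eq_zero_of_not_summable hs]
    exact zero_le
end
end

section
/- (Conditional conformal validity, Remark 7.) Suppose the law of the data D over trajectories has probability mass function f(d) = ∏_{t=1}^T pC(c_t) · a_t(x_t; c_t, h_{t−1}(d)) · r(y_t; c_t, x_t), where pC : 𝒞 → ℝ≥0 is the (time-invariant) context law and r : 𝒴 × 𝒞 × 𝒳 → ℝ≥0 is a response law not depending on t (the non-stationarity null H₀^S). Take f̂(d) = ∏_{t=1}^T a_t(x_t; c_t, h_{t−1}(d)), and let q be any resampling distribution such that q(d̃ | d) > 0 implies both: (i) there exists a permutation π of {1, …, T} with d̃_t = d_{π(t)} for all t, and (ii) the final action is preserved, x̃_T = x_T. Then the p-value is valid conditionally on the final action: for every x ∈ 𝒳 and every α ∈ [0,1], Σ_{(d₀,…,d_m)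 : p(d₀,…,d_m) ≤ α and the T-th action of d₀ equals x} h(d₀,…,d_m) ≤ α · Σ_{d : the T-th action of d equals x} f(d). Equivalently, the prediction set obtained by inverting this test covers Y_T with probability at least 1 − α conditionally on X_T = x, for every x with positive probability. -/
open scoped NNReal Classical BigOperators

noncomputable section

/-! Trajectory machinery. -/

variable {C X Y : Type*}

/-! Helper lemmas. -/

lemma wNum_comp_perm {D : Type*} (q : D → D → ℝ≥0) (fh : D → ℝ≥0) (m : ℕ)
    (σ : Equiv.Perm (Fin (m + 1))) (i : Fin (m + 1)) (d : Fin (m + 1) → D) :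
    wNum q fh m i (d ∘ σ) = wNum q fh m (σ i) d := by
  unfold wNum
  congr 1
  refine Finset.prod_equiv σ ?_ ?_
  · intro k; simp
  · intro k _; rfl

lemma weight_comp_perm {D : Type*} (q : D → D → ℝ≥0) (fh : D → ℝ≥0) (m : ℕ)
    (σ : Equiv.Perm (Fin (m + 1))) (i : Fin (m + 1)) (d : Fin (m + 1) → D) :
    weight q fh m i (d ∘ σ) = weight q fh m (σ i) d := by
  unfold weight
  simp only [wNum_comp_perm]
  rw [Equiv.sum_comp σ (fun j => wNum q fh m j d)]

lemma pValue_comp_perm {D : Type*} (q : D → D → ℝ≥0) (fh : D → ℝ≥0) (m : ℕ) (S : D → ℝ)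
    (σ : Equiv.Perm (Fin (m + 1))) (d : Fin (m + 1) → D) :
    pValue q fh m S (d ∘ σ) =
      ∑ k, weight q fh m k d * (if S (d (σ 0)) ≤ S (d k) then 1 else 0) := by
  unfold pValue
  simp only [weight_comp_perm, Function.comp]
  exact Equiv.sum_comp σ
    (fun k => weight q fh m k d * (if S (d (σ 0)) ≤ S (d k) then (1 : ℝ≥0) else 0))

lemma det_bound {ι : Type*} [Fintype ι] (w : ι → ℝ≥0) (s : ι → ℝ) (α : ℝ≥0) :
    ∑ i, (if ∑ k, w k * (if s i ≤ s k then 1 else 0) ≤ α then w i else 0) ≤ α := by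
  rw [← Finset.sum_filter]
  set A := Finset.univ.filter
    (fun i => ∑ k, w k * (if s i ≤ s k then (1 : ℝ≥0) else 0) ≤ α) with hA
  rcases A.eq_empty_or_nonempty with h | h
  · rw [h]; simp
  · obtain ⟨i, hi, hmin⟩ := A.exists_min_image s h
    have hi2 : ∑ k, w k * (if s i ≤ s k then (1 : ℝ≥0) else 0) ≤ α := by
      simpa [hA] using hi
    refine le_trans ?_ hi2
    calc ∑ k ∈ A, w k = ∑ k ∈ A, w k * (if s i ≤ s k then (1 : ℝ≥0) else 0) := by
          refine Finset.sum_congr rfl fun k hk => ?_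
          rw [if_pos (hmin k hk), mul_one]
      _ ≤ _ := Finset.sum_le_sum_of_subset (Finset.subset_univ _)

lemma tsum_pi_prod {D : Type*} (g : D → ENNReal) (n : ℕ) :
    ∑' d : Fin n → D, ∏ k, g (d k) = (∑' e, g e) ^ n := by
  induction n with
  | zero => simp
  | succ n ih =>
    rw [← (Fin.consEquiv (fun _ : Fin (n + 1) => D)).tsum_eq, ENNReal.tsum_prod']
    simp only [Fin.consEquiv_apply, Fin.prod_univ_succ, Fin.cons_zero, Fin.cons_succ,
      ENNReal.tsum_mul_left, ih, ENNReal.tsum_mul_right]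
    rw [pow_succ']

lemma tsum_jointLaw {D : Type*} (f : D → ℝ≥0) (q : D → D → ℝ≥0) (m : ℕ)
    (hq : ∀ d, ∑' e, (q e d : ENNReal) = 1) :
    ∑' dd : Fin (m + 1) → D, (wNum q f m 0 dd : ENNReal) = ∑' d, (f d : ENNReal) := by
  rw [← (Fin.consEquiv (fun _ : Fin (m + 1) => D)).tsum_eq, ENNReal.tsum_prod']
  refine tsum_congr fun d => ?_
  have key : ∀ b : Fin m → D,
      (wNum q f m 0 (Fin.cons d b : Fin (m + 1) → D) : ENNReal)
        = (f d : ENNReal) * ∏ k, (q (b k) d : ENNReal) := by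
    intro b
    have he : (Finset.univ.erase (0 : Fin (m + 1))) = Finset.univ.image Fin.succ := by
      ext k; simp
    unfold wNum
    rw [he, Finset.prod_image (fun a _ b _ h => Fin.succ_injective _ h)]
    simp
  refine (tsum_congr key).trans ?_
  rw [ENNReal.tsum_mul_left,
    tsum_pi_prod (fun e => (q e d : ENNReal)), hq, one_pow, mul_one]

lemma wNum_mul {D : Type*} (q : D → D → ℝ≥0) (fh G : D → ℝ≥0) (m : ℕ)
    (hG : ∀ d e, 0 < q e d → G e = G d) (i : Fin (m + 1)) (d : Fin (m + 1) → D) :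
    wNum q (fun d => G d * fh d) m i d =
      weight q fh m i d * ∑ j, wNum q (fun d => G d * fh d) m j d := by
  have h1 : ∀ j, wNum q (fun d => G d * fh d) m j d = G (d j) * wNum q fh m j d := by
    intro j; unfold wNum; ring
  simp only [h1]
  unfold weight
  by_cases h : wNum q fh m i d = 0
  · simp [h]
  · have h2 : ∀ j, G (d j) = G (d i) := by
      intro j
      by_cases hj : j = i
      · rw [hj]
      · apply hG
        have : ∏ k ∈ Finset.univ.erase i, q (d k) (d i) ≠ 0 := by
          intro h0; apply h; unfold wNum; rw [h0, mul_zero]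
        rw [Finset.prod_ne_zero_iff] at this
        exact pos_iff_ne_zero.2 (this j (by simp [hj]))
    simp only [h2]
    rw [← Finset.mul_sum]
    have h3 : ∑ j, wNum q fh m j d ≠ 0 := by
      intro h0
      rw [Finset.sum_eq_zero_iff] at h0
      exact h (h0 i (Finset.mem_univ _))
    field_simp

lemma generic_valid {D : Type*} (q : D → D → ℝ≥0) (fh G : D → ℝ≥0) (m : ℕ) (S : D → ℝ)
    (hq : ∀ d, ∑' e, (q e d : ENNReal) = 1)
    (hG : ∀ d e, 0 < q e d → G e = G d) (α : ℝ≥0) :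
    ∑' dd : Fin (m + 1) → D,
      (if pValue q fh m S dd ≤ α then
        (wNum q (fun d => G d * fh d) m 0 dd : ENNReal) else 0) ≤
      α * ∑' d, ((G d * fh d : ℝ≥0) : ENNReal) := by
  set F := fun d => G d * fh d with hF
  set L := ∑' dd : Fin (m + 1) → D,
      (if pValue q fh m S dd ≤ α then (wNum q F m 0 dd : ENNReal) else 0) with hL
  have perm : ∀ (i : Fin (m + 1)) (H : (Fin (m + 1) → D) → ENNReal),
      ∑' dd, H dd = ∑' dd, H (dd ∘ Equiv.swap 0 i) := by
    intro i H
    exact (((Equiv.swap 0 i).symm.arrowCongr (Equiv.refl D)).tsum_eq H).symm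
  have e1 : ∀ i : Fin (m + 1), L = ∑' dd : Fin (m + 1) → D,
      (if ∑ k, weight q fh m k dd * (if S (dd i) ≤ S (dd k) then 1 else 0) ≤ α
        then (wNum q F m i dd : ENNReal) else 0) := by
    intro i
    rw [hL, perm i]
    simp only [pValue_comp_perm, wNum_comp_perm, Equiv.swap_apply_left]
  have e2 : ∀ i : Fin (m + 1), ∑' d, (F d : ENNReal) =
      ∑' dd : Fin (m + 1) → D, (wNum q F m i dd : ENNReal) := by
    intro i
    rw [← tsum_jointLaw F q m hq, perm i]
    simp only [wNum_comp_perm, Equiv.swap_apply_left]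
  have hmain : ((m + 1 : ℕ) : ENNReal) * L ≤
      ((m + 1 : ℕ) : ENNReal) * (α * ∑' d, (F d : ENNReal)) := by
    have l1 : ((m + 1 : ℕ) : ENNReal) * L = ∑ i : Fin (m + 1), L := by simp
    have l2 : ((m + 1 : ℕ) : ENNReal) * (α * ∑' d, (F d : ENNReal))
        = α * ∑ i : Fin (m + 1), ∑' d, (F d : ENNReal) := by
      simp; ring
    rw [l1, l2, Finset.sum_congr rfl (fun i _ => e1 i),
      Finset.sum_congr rfl (fun i _ => e2 i),
      ← Summable.tsum_finsetSum (fun _ _ => ENNReal.summable),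
      ← Summable.tsum_finsetSum (fun _ _ => ENNReal.summable), ← ENNReal.tsum_mul_left]
    refine ENNReal.tsum_le_tsum fun dd => ?_
    have hb := det_bound (fun k => weight q fh m k dd) (fun k => S (dd k)) α
    have hb2 := mul_le_mul_left hb (∑ j, wNum q F m j dd)
    rw [Finset.sum_mul] at hb2
    have hb3 : ∑ i, (if ∑ k, weight q fh m k dd * (if S (dd i) ≤ S (dd k) then 1 else 0) ≤ α
        then wNum q F m i dd else 0) ≤ α * ∑ j, wNum q F m j dd := by
      refine le_trans (le_of_eq ?_) hb2
      refine Finset.sum_congr rfl fun i _ => ?_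
      split_ifs
      · exact wNum_mul q fh G m hG i dd
      · simp
    have hb4 := ENNReal.coe_le_coe.2 hb3
    push_cast at hb4
    refine le_trans (le_of_eq (Finset.sum_congr rfl fun i _ => ?_)) hb4
    split_ifs <;> simp
  exact (ENNReal.mul_le_mul_iff_right (by simp) (by simp)).1 hmain

lemma coe_tsum_le {D : Type*} (f : D → ℝ≥0) :
    ((∑' d, f d : ℝ≥0) : ENNReal) ≤ ∑' d, (f d : ENNReal) := by
  by_cases h : Summable f
  · rw [ENNReal.coe_tsum h]
  · rw [tsum_eq_zero_of_not_summable h]; simp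

lemma summable_of_tsum_one {D : Type*} {f : D → ℝ≥0} (h : ∑' d, f d = 1) : Summable f := by
  by_contra hn
  rw [tsum_eq_zero_of_not_summable hn] at h
  exact zero_ne_one h

/-- **(Conditional conformal validity, Remark 7.)** If moreover every positive-
probability resample preserves the final action `x_T`, then the p-value is valid
conditionally on the final action: for every `x` and `α ∈ [0,1]`,
`P(p ≤ α and X_T = x) ≤ α · P(X_T = x)`. -/
theorem conditional_conformal_validity
    [Countable C] [Countable X] [Countable Y]
    (T : ℕ) (hT : 0 < T)
    (pC : C → ℝ≥0)
    (a : (t : Fin T) → X → C → (Fin (t : ℕ) → C × X × Y) → ℝ≥0)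
    (r : Y → C → X → ℝ≥0)
    (q : (Fin T → C × X × Y) → (Fin T → C × X × Y) → ℝ≥0)
    (m : ℕ) (hm : 1 ≤ m)
    (S : (Fin T → C × X × Y) → ℝ)
    (hf : ∑' d, statTrajLaw pC a r d = 1)
    (hq : ∀ d, ∑' e, q e d = 1)
    (last : Fin T) (hlast : (last : ℕ) = T - 1)
    (hperm : ∀ d dtil, 0 < q dtil d →
      (∃ π : Equiv.Perm (Fin T), ∀ t, dtil t = d (π t)) ∧
        (dtil last).2.1 = (d last).2.1) :
    ∀ (x : X) (α : ℝ≥0), α ≤ 1 →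
      (∑' dd : Fin (m + 1) → (Fin T → C × X × Y),
        if pValue q (assignLik a) m S dd ≤ α ∧ ((dd 0) last).2.1 = x then
          jointLaw (statTrajLaw pC a r) q m dd
        else 0) ≤
      α * ∑' d : Fin T → C × X × Y,
            (if (d last).2.1 = x then statTrajLaw pC a r d else 0) := by
  intro x α _
  have hq' : ∀ d, ∑' e, (q e d : ENNReal) = 1 := by
    intro d
    rw [← ENNReal.coe_tsum (summable_of_tsum_one (hq d)), hq d, ENNReal.coe_one]
  let G : (Fin T → C × X × Y) → ℝ≥0 := fun d =>
    if (d last).2.1 = x then ∏ t, (pC (d t).1 * r (d t).2.2 (d t).1 (d t).2.1) else 0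
  have hG : ∀ d e, 0 < q e d → G e = G d := by
    intro d e h
    obtain ⟨⟨π, hπ⟩, hl⟩ := hperm d e h
    simp only [G]
    rw [hl]
    simp only [hπ]
    rw [Equiv.prod_comp π (fun t => pC (d t).1 * r (d t).2.2 (d t).1 (d t).2.1)]
  have hGf : ∀ d, G d * assignLik a d =
      if (d last).2.1 = x then statTrajLaw pC a r d else 0 := by
    intro d
    simp only [G]
    split_ifs
    · unfold assignLik statTrajLaw
      rw [← Finset.prod_mul_distrib]
      exact Finset.prod_congr rfl fun t _ => by ring
    · simp
  have hsum : Summable (fun d : Fin T → C × X × Y =>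
      if (d last).2.1 = x then statTrajLaw pC a r d else 0) := by
    refine NNReal.summable_of_le (fun d => ?_) (summable_of_tsum_one hf)
    split_ifs <;> simp
  rw [← ENNReal.coe_le_coe, ENNReal.coe_mul, ENNReal.coe_tsum hsum]
  refine (coe_tsum_le _).trans ?_
  have := generic_valid q (assignLik a) G m S hq' hG α
  simp only [hGf] at this
  refine le_trans (le_of_eq (tsum_congr fun dd => ?_)) this
  unfold wNum jointLaw
  by_cases h1 : pValue q (assignLik a) m S dd ≤ α <;>
    by_cases h2 : ((dd 0) last).2.1 = x <;> simp [h1, h2]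
end
end
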